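/- arXiv:2402.14113 — 2 statements merged into one kernel-verified Lean document; each statement's English description precedes it below -/
import Mathlib

section
/- For every integer k ≥ 7 there exists n₀ such that for every n ≥ n₀ there is a saturated k-Sperner system F ⊆ P([n]) with |F| ≤ 2^{(1-ε)k}, where ε = 1 - (log₂ 28)/5 (equivalently, |F| ≤ 28^{k/5}). -/
open Finset

/-- A family contains a chain of `m` sets `C 0 ⊊ C 1 ⊊ ⋯ ⊊ C (m-1)`. -/
def HasChainOfLen {α : Type*} [DecidableEq α] (F : Finset (Finset α)) (m : ℕ) : Prop :=
  ∃ C : Fin m → Finset α, StrictMono C ∧ ∀ i, C i ∈ F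

/-- `F ⊆ P(X)` is a saturated `k`-Sperner system: it has no chain of `k+1` sets,
and adding any `S ⊆ X` with `S ∉ F` creates a chain of `k+1` sets. -/
def IsSatKSperner {α : Type*} [DecidableEq α] (X : Finset α) (F : Finset (Finset α))
    (k : ℕ) : Prop :=
  (∀ A ∈ F, A ⊆ X) ∧ ¬ HasChainOfLen F (k + 1) ∧
    ∀ S ⊆ X, S ∉ F → HasChainOfLen (insert S F) (k + 1)

/-- `H` is a homogeneous atom for `F` in `P(X)`: `H ⊆ X` is maximal with the property
that every member of `F` contains all of `H` or none of it, and `|H| ≥ 2`. -/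
def IsHomogAtom {α : Type*} [DecidableEq α] (X : Finset α) (F : Finset (Finset α))
    (H : Finset α) : Prop :=
  H ⊆ X ∧ (∀ S ∈ F, S ∩ H = ∅ ∨ S ∩ H = H) ∧
    (∀ B ⊆ X, (∀ S ∈ F, S ∩ B = ∅ ∨ S ∩ B = B) → H ⊆ B → H = B) ∧
    2 ≤ H.card

/-- The small members of `F` (those disjoint from the homogeneous atom `H`). -/
def smallSets {α : Type*} [DecidableEq α] (F : Finset (Finset α)) (H : Finset α) :
    Finset (Finset α) :=
  F.filter fun S => S ∩ H = ∅

/-- The large members of `F` (those containing the homogeneous atom `H`). -/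
def largeSets {α : Type*} [DecidableEq α] (F : Finset (Finset α)) (H : Finset α) :
    Finset (Finset α) :=
  F.filter fun S => H ⊆ S

/-- The minimal elements (under inclusion) of a family of sets. -/
def minimalsIn {α : Type*} [DecidableEq α] (G : Finset (Finset α)) : Finset (Finset α) :=
  G.filter fun A => ∀ B ∈ G, B ⊆ A → B = A

/-- What remains of `F` after stripping off minimal elements `i` times. -/
def canonRest {α : Type*} [DecidableEq α] (F : Finset (Finset α)) : ℕ → Finset (Finset α)
  | 0 => F
  | i + 1 => canonRest F i \ minimalsIn (canonRest F i)

/-- The canonical decomposition of `F` into antichains: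
`canonDecomp F i` is the family of minimal elements of `F \ ⋃_{j<i} canonDecomp F j`. -/
def canonDecomp {α : Type*} [DecidableEq α] (F : Finset (Finset α)) (i : ℕ) :
    Finset (Finset α) :=
  minimalsIn (canonRest F i)

/-- A sequence `(D i)_{i=0}^t` of families is layered if for `1 ≤ i ≤ t`,
every member of `D i` strictly contains some member of `D (i-1)`. -/
def Layered {α : Type*} [DecidableEq α] (D : ℕ → Finset (Finset α)) (t : ℕ) : Prop :=
  ∀ i, 1 ≤ i → i ≤ t → ∀ A ∈ D i, ∃ B ∈ D (i - 1), B ⊂ A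

/-!
Call `x` lower (upper) critical for a rank function `r` if `r` takes strictly smaller (larger)
values at every smaller (larger) point. If `r` has height `K` on `Finset α` and `H` is a nonempty
set disjoint from `α`, then the lower critical sets together with the sets `T ∪ H`, `T` upper
critical, form a saturated `(K + 2)`-Sperner system on `α ∪ H`: a set outside the system splits as
`S ∪ R` with `R ⊆ H`, and it lies strictly between a chain of `r S + 1` lower critical subsets of
`S` and a chain of `K - r S + 1` upper critical supersets of `S` joined with `H`. The size of this
system does not depend on `H`.

Adding rank functions on disjoint ground sets adds the heights and multiplies the numbers of
critical sets. The cardinality has height `1` and `2` critical sets per point, and the Fano plane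
with a Hamiltonian cycle on its points carries a rank function of height `5` with only `28 < 2 ^ 5`
of each kind.
-/

section Saturation

variable {P : Type*}

/-- The family `F` in an ordered set contains a chain of `m` elements. In the Boolean lattice this
is `HasChainOfLen`. -/
def HasChain [Preorder P] (F : Set P) (m : ℕ) : Prop :=
  ∃ C : Fin m → P, StrictMono C ∧ ∀ i, C i ∈ F

/-- The analogue of a saturated `k`-Sperner system in an arbitrary ordered set. -/
structure IsSaturatedSperner [Preorder P] (F : Set P) (k : ℕ) : Prop where
  not_hasChain : ¬ HasChain F (k + 1)
  hasChain_insert : ∀ x ∉ F, HasChain (insert x F) (k + 1)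

theorem HasChain.of_sortedLT [Preorder P] {F : Set P} {l : List P} (hl : l.SortedLT)
    (hF : ∀ x ∈ l, x ∈ F) : HasChain F l.length :=
  ⟨l.get, hl.strictMono_get, fun i => hF _ (l.get_mem i)⟩

theorem not_hasChain_of_strictMonoOn [Preorder P] {F : Set P} {k : ℕ} {w : P → ℕ}
    (hw : StrictMonoOn w F) (hlt : ∀ x, w x < k) : ¬ HasChain F (k + 1) := by
  rintro ⟨C, hC, hCF⟩
  have hinj : StrictMono fun i => (⟨w (C i), hlt _⟩ : Fin k) :=
    fun i j hij => hw (hCF i) (hCF j) (hC hij)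
  simpa using Fintype.card_le_of_injective _ hinj.injective

theorem isSaturatedSperner_empty [Preorder P] : IsSaturatedSperner (∅ : Set P) 0 where
  not_hasChain := fun ⟨_, _, hF⟩ => hF 0
  hasChain_insert x _ := .of_sortedLT (List.pairwise_singleton _ x).sortedLT (by simp)

theorem isSaturatedSperner_singleton_bot [PartialOrder P] [OrderBot P] :
    IsSaturatedSperner ({⊥} : Set P) 1 where
  not_hasChain := fun ⟨C, hC, hF⟩ =>
    (hC Fin.zero_lt_one).ne ((hF 0).trans (hF 1).symm)
  hasChain_insert x hx := by
    have hsorted : [⊥, x].Pairwise (· < ·) := List.pairwise_pair.2 (bot_lt_iff_ne_bot.2 hx)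
    exact .of_sortedLT hsorted.sortedLT (by simp)

theorem IsSaturatedSperner.exists_isSatKSperner [Preorder P] {β : Type*} [DecidableEq β]
    {X : Finset β} {F : Set P} {k : ℕ} (h : IsSaturatedSperner F k) (hF : F.Finite)
    (f : P ↪o Finset β) (hf : Set.range f = Set.Iic X) :
    ∃ G : Finset (Finset β), IsSatKSperner X G k ∧ #G = F.ncard := by
  have mem_G {A : Finset β} : A ∈ (hF.image f).toFinset ↔ ∃ x ∈ F, f x = A := by simp
  refine ⟨(hF.image f).toFinset, ⟨fun A hA => ?_, ?_, fun A hAX hA => ?_⟩, ?_⟩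
  · obtain ⟨x, -, rfl⟩ := mem_G.1 hA
    exact hf.subset (Set.mem_range_self x)
  · rintro ⟨C, hC, hCG⟩
    choose D hDF hDC using fun i => mem_G.1 (hCG i)
    refine h.not_hasChain ⟨D, fun i j hij => f.lt_iff_lt.1 ?_, hDF⟩
    simpa only [hDC] using hC hij
  · obtain ⟨x, rfl⟩ := hf.superset hAX
    have hx : x ∉ F := fun hx => hA (mem_G.2 ⟨x, hx, rfl⟩)
    obtain ⟨C, hC, hCF⟩ := h.hasChain_insert x hx
    refine ⟨f ∘ C, f.strictMono.comp hC, fun i => mem_insert.2 ?_⟩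
    exact (hCF i).imp (congrArg f) fun hi => mem_G.2 ⟨_, hi, rfl⟩
  · rw [← Set.ncard_eq_toFinset_card _ (hF.image f), Set.ncard_image_of_injective _ f.injective]

end Saturation

section RankFunction

variable {P Q : Type*} {r : P → ℕ} {q : Q → ℕ} {K L : ℕ}

/-- A rank function of height `K`: monotone, bounded by `K`, and attaining every rank in `[0, r x]`
below `x` and every rank in `[r x, K]` above `x`. -/
structure IsRankFunction [Preorder P] (r : P → ℕ) (K : ℕ) : Prop where
  monotone : Monotone r
  le_height : ∀ x, r x ≤ K
  exists_le : ∀ x, ∀ j ≤ r x, ∃ y ≤ x, r y = j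
  exists_ge : ∀ x, ∀ j, r x ≤ j → j ≤ K → ∃ y ≥ x, r y = j

/-- The elements that are minimal among those of at least their rank. -/
def lowerCritical [Preorder P] (r : P → ℕ) : Set P :=
  {x | ∀ y < x, r y < r x}

/-- The elements that are maximal among those of at most their rank. -/
def upperCritical [Preorder P] (r : P → ℕ) : Set P :=
  {x | ∀ y > x, r x < r y}

theorem lowerCritical_dual_subset [Preorder P] (r : P → ℕ) (K : ℕ) :
    lowerCritical (fun x : Pᵒᵈ => K - r x.ofDual) ⊆ OrderDual.ofDual ⁻¹' upperCritical r := by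
  intro x hx y hxy
  have hlt : K - r y < K - r x.ofDual := hx (OrderDual.toDual y) hxy
  omega

theorem upperCritical_eq_image_compl [BooleanAlgebra P] (hr : ∀ x, r x + r xᶜ = K) :
    upperCritical r = compl '' lowerCritical r := by
  ext x
  rw [Set.mem_compl_image]
  have hrx := hr x
  refine ⟨fun hx y hy => ?_, fun hx y hy => ?_⟩
  · have hry := hr y
    have hlt := hx yᶜ (by simpa using compl_lt_compl_iff_lt.2 hy)
    omega
  · have hry := hr y
    have hlt := hx yᶜ (compl_lt_compl_iff_lt.2 hy)
    omega

theorem lowerCritical_add_subset [Preorder P] [Preorder Q] (r : P → ℕ) (q : Q → ℕ) :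
    lowerCritical (fun p : P × Q => r p.1 + q p.2) ⊆ lowerCritical r ×ˢ lowerCritical q :=
  fun x hx => ⟨fun y hy => Nat.lt_of_add_lt_add_right (hx (y, x.2) (Prod.mk_lt_mk_iff_left.2 hy)),
    fun y hy => Nat.lt_of_add_lt_add_left (hx (x.1, y) (Prod.mk_lt_mk_iff_right.2 hy))⟩

theorem upperCritical_add_subset [Preorder P] [Preorder Q] (r : P → ℕ) (q : Q → ℕ) :
    upperCritical (fun p : P × Q => r p.1 + q p.2) ⊆ upperCritical r ×ˢ upperCritical q :=
  fun x hx => ⟨fun y hy => Nat.lt_of_add_lt_add_right (hx (y, x.2) (Prod.mk_lt_mk_iff_left.2 hy)),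
    fun y hy => Nat.lt_of_add_lt_add_left (hx (x.1, y) (Prod.mk_lt_mk_iff_right.2 hy))⟩

theorem lowerCritical_comp_orderIso [Preorder P] [Preorder Q] (r : P → ℕ) (e : Q ≃o P) :
    lowerCritical (r ∘ e) = e ⁻¹' lowerCritical r := by
  ext x
  simp [lowerCritical, e.surjective.forall]

theorem upperCritical_comp_orderIso [Preorder P] [Preorder Q] (r : P → ℕ) (e : Q ≃o P) :
    upperCritical (r ∘ e) = e ⁻¹' upperCritical r := by
  ext x
  simp [upperCritical, e.surjective.forall]

namespace IsRankFunction

theorem dual [Preorder P] (hr : IsRankFunction r K) :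
    IsRankFunction (fun x : Pᵒᵈ => K - r x.ofDual) K where
  monotone _ _ hxy := Nat.sub_le_sub_left (hr.monotone hxy) K
  le_height _ := Nat.sub_le _ _
  exists_le x j hj := by
    have := hr.le_height x.ofDual
    obtain ⟨y, hxy, hy⟩ := hr.exists_ge x.ofDual (K - j) (by omega) (Nat.sub_le _ _)
    exact ⟨OrderDual.toDual y, hxy, by simp only [OrderDual.ofDual_toDual]; omega⟩
  exists_ge x j hj hjK := by
    obtain ⟨y, hyx, hy⟩ := hr.exists_le x.ofDual (K - j) (by omega)
    exact ⟨OrderDual.toDual y, hyx, by simp only [OrderDual.ofDual_toDual]; omega⟩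

theorem of_compl [BooleanAlgebra P] (hmono : Monotone r) (hcompl : ∀ x, r x + r xᶜ = K)
    (hle : ∀ x, ∀ j ≤ r x, ∃ y ≤ x, r y = j) : IsRankFunction r K where
  monotone := hmono
  le_height x := (Nat.le_add_right _ _).trans_eq (hcompl x)
  exists_le := hle
  exists_ge x j hj hjK := by
    have hx := hcompl x
    obtain ⟨y, hyx, hy⟩ := hle xᶜ (K - j) (by omega)
    refine ⟨yᶜ, le_compl_comm.1 hyx, ?_⟩
    have := hcompl y
    omega

theorem add [Preorder P] [Preorder Q] (hr : IsRankFunction r K) (hq : IsRankFunction q L) :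
    IsRankFunction (fun p : P × Q => r p.1 + q p.2) (K + L) where
  monotone _ _ h := add_le_add (hr.monotone h.1) (hq.monotone h.2)
  le_height p := add_le_add (hr.le_height p.1) (hq.le_height p.2)
  exists_le p j hj := by
    obtain ⟨x, hx, hrx⟩ := hr.exists_le p.1 (min j (r p.1)) (by omega)
    obtain ⟨y, hy, hqy⟩ := hq.exists_le p.2 (j - min j (r p.1)) (by omega)
    exact ⟨(x, y), ⟨hx, hy⟩, by simp only; omega⟩
  exists_ge p j hj hjKL := by
    have := hr.le_height p.1
    have := hq.le_height p.2
    obtain ⟨x, hx, hrx⟩ := hr.exists_ge p.1 (min K (j - q p.2)) (by omega) (by omega)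
    obtain ⟨y, hy, hqy⟩ := hq.exists_ge p.2 (j - min K (j - q p.2)) (by omega) (by omega)
    exact ⟨(x, y), ⟨hx, hy⟩, by simp only; omega⟩

theorem comp_orderIso [Preorder P] [Preorder Q] (hr : IsRankFunction r K) (e : Q ≃o P) :
    IsRankFunction (r ∘ e) K where
  monotone := hr.monotone.comp e.monotone
  le_height x := hr.le_height (e x)
  exists_le x j hj := by
    obtain ⟨y, hyx, hy⟩ := hr.exists_le (e x) j hj
    exact ⟨e.symm y, e.symm_apply_le.2 hyx, by simpa using hy⟩
  exists_ge x j hj hjK := by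
    obtain ⟨y, hxy, hy⟩ := hr.exists_ge (e x) j hj hjK
    exact ⟨e.symm y, e.le_symm_apply.2 hxy, by simpa using hy⟩

theorem exists_mem_lowerCritical_le [Preorder P] [WellFoundedLT P] (hr : IsRankFunction r K)
    {x : P} {j : ℕ} (hj : j ≤ r x) : ∃ y ∈ lowerCritical r, y ≤ x ∧ r y = j := by
  obtain ⟨y, ⟨hyx, hy⟩, hmin⟩ :=
    WellFounded.has_min wellFounded_lt {y | y ≤ x ∧ r y = j} (hr.exists_le x j hj)
  refine ⟨y, fun z hzy => ?_, hyx, hy⟩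
  have hne : r z ≠ r y := fun h => hmin z ⟨hzy.le.trans hyx, h.trans hy⟩ hzy
  exact (hr.monotone hzy.le).lt_of_ne hne

theorem exists_lowerCritical_chain [PartialOrder P] [WellFoundedLT P] (hr : IsRankFunction r K)
    (x : P) : ∃ l : List P, l.SortedLT ∧ l.length = r x + 1 ∧
      ∀ y ∈ l, y ∈ lowerCritical r ∧ y ≤ x := by
  induction hj : r x generalizing x with
  | zero =>
    obtain ⟨y, hy, hyx, -⟩ := hr.exists_mem_lowerCritical_le le_rfl
    exact ⟨[y], (List.pairwise_singleton _ y).sortedLT, rfl, by simpa using ⟨hy, hyx⟩⟩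
  | succ j ih =>
    obtain ⟨y, hy, hyx, hry⟩ := hr.exists_mem_lowerCritical_le hj.ge
    obtain ⟨z, hzy, hz⟩ := hr.exists_le y j (by omega)
    have hzy : z < y := hzy.lt_of_ne (by rintro rfl; omega)
    obtain ⟨l, hl, hlen, hlz⟩ := ih z hz
    refine ⟨l ++ [y], List.Pairwise.sortedLT ?_, by simp [hlen], fun w hw => ?_⟩
    · exact List.pairwise_append.2 ⟨hl.pairwise, List.pairwise_singleton _ _,
        fun w hw v hv => (hlz w hw).2.trans_lt (List.mem_singleton.1 hv ▸ hzy)⟩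
    · rcases List.mem_append.1 hw with hw | hw
      · exact ⟨(hlz w hw).1, ((hlz w hw).2.trans_lt hzy).le.trans hyx⟩
      · exact List.mem_singleton.1 hw ▸ ⟨hy, hyx⟩

theorem exists_upperCritical_chain [PartialOrder P] [WellFoundedGT P] (hr : IsRankFunction r K)
    (x : P) : ∃ l : List P, l.SortedLT ∧ l.length = K - r x + 1 ∧
      ∀ y ∈ l, y ∈ upperCritical r ∧ x ≤ y := by
  obtain ⟨l, hl, hlen, hlx⟩ := hr.dual.exists_lowerCritical_chain (OrderDual.toDual x)
  refine ⟨(l.map OrderDual.ofDual).reverse, List.Pairwise.sortedLT ?_, by simpa using hlen,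
    fun y hy => ?_⟩
  · exact List.pairwise_reverse.2 (hl.pairwise.map _ fun _ _ h => h)
  · obtain ⟨z, hz, rfl⟩ := List.mem_map.1 (List.mem_reverse.1 hy)
    exact ⟨lowerCritical_dual_subset r K (hlx z hz).1, (hlx z hz).2⟩

end IsRankFunction

/-- The lower critical elements at the bottom of `Q` and the upper critical ones at the top. When
`P = Finset α` and `Q = Finset H`, this is the family of all `S` and `T ∪ H` with `S` lower critical
and `T` upper critical. -/
def criticalFamily [Preorder P] (r : P → ℕ) (Q : Type*) [Preorder Q] [BoundedOrder Q] :
    Set (P × Q) :=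
  lowerCritical r ×ˢ {⊥} ∪ upperCritical r ×ˢ {⊤}

theorem ncard_criticalFamily_le [Preorder P] (r : P → ℕ) (Q : Type*) [Preorder Q]
    [BoundedOrder Q] :
    (criticalFamily r Q).ncard ≤ (lowerCritical r).ncard + (upperCritical r).ncard :=
  (Set.ncard_union_le _ _).trans (by simp [Set.ncard_prod])

open Classical in
theorem strictMonoOn_criticalFamily [Preorder P] [PartialOrder Q] [BoundedOrder Q]
    [Nontrivial Q] (hr : Monotone r) :
    StrictMonoOn (fun z : P × Q => r z.1 + if z.2 = ⊤ then 1 else 0) (criticalFamily r Q) := by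
  rintro ⟨x, s⟩ (⟨hx, rfl : s = ⊥⟩ | ⟨hx, rfl : s = ⊤⟩) ⟨y, t⟩
    (⟨hy, rfl : t = ⊥⟩ | ⟨hy, rfl : t = ⊤⟩) hlt
  · simpa using hy x (Prod.mk_lt_mk_iff_left.1 hlt)
  · simpa using Nat.lt_succ_of_le (hr hlt.le.1)
  · exact absurd (top_le_iff.1 hlt.le.2) bot_ne_top
  · simpa using hx y (Prod.mk_lt_mk_iff_left.1 hlt)

theorem IsRankFunction.hasChain_insert_criticalFamily [PartialOrder P] [Finite P] [PartialOrder Q]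
    [BoundedOrder Q] (hr : IsRankFunction r K) {z : P × Q} (hz : z ∉ criticalFamily r Q) :
    HasChain (insert z (criticalFamily r Q)) (K + 3) := by
  obtain ⟨l, hl, hlen, hlz⟩ := hr.exists_lowerCritical_chain z.1
  obtain ⟨u, hu, hulen, huz⟩ := hr.exists_upperCritical_chain z.1
  have mem_lower {x : P} (hx : x ∈ l) : (x, (⊥ : Q)) ∈ criticalFamily r Q :=
    Or.inl ⟨(hlz x hx).1, rfl⟩
  have mem_upper {y : P} (hy : y ∈ u) : (y, (⊤ : Q)) ∈ criticalFamily r Q :=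
    Or.inr ⟨(huz y hy).1, rfl⟩
  have lower_lt {x : P} (hx : x ∈ l) : (x, ⊥) < z :=
    lt_of_le_of_ne ⟨(hlz x hx).2, bot_le⟩ (ne_of_mem_of_not_mem (mem_lower hx) hz)
  have lt_upper {y : P} (hy : y ∈ u) : z < (y, ⊤) :=
    lt_of_le_of_ne ⟨(huz y hy).2, le_top⟩ (ne_of_mem_of_not_mem (mem_upper hy) hz).symm
  let c : List (P × Q) := l.map (·, ⊥) ++ z :: u.map (·, ⊤)
  have hsorted : c.Pairwise (· < ·) := by
    refine List.pairwise_append.2 ⟨hl.pairwise.map _ fun _ _ => Prod.mk_lt_mk_iff_left.2,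
      List.pairwise_cons.2 ⟨?_, hu.pairwise.map _ fun _ _ => Prod.mk_lt_mk_iff_left.2⟩, ?_⟩
    · simpa using fun y hy => lt_upper hy
    · rintro _ hp _ hp'
      obtain ⟨x, hx, rfl⟩ := List.mem_map.1 hp
      obtain rfl | hp' := List.mem_cons.1 hp'
      · exact lower_lt hx
      · obtain ⟨y, hy, rfl⟩ := List.mem_map.1 hp'
        exact (lower_lt hx).trans (lt_upper hy)
  have hlength : c.length = K + 3 := by
    have := hr.le_height z.1
    simp only [c, List.length_append, List.length_cons, List.length_map]
    omega
  refine hlength ▸ HasChain.of_sortedLT hsorted.sortedLT fun p hp => ?_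
  simp only [c, List.mem_append, List.mem_map, List.mem_cons] at hp
  rcases hp with ⟨x, hx, rfl⟩ | rfl | ⟨y, hy, rfl⟩
  exacts [Or.inr (mem_lower hx), Or.inl rfl, Or.inr (mem_upper hy)]

theorem IsRankFunction.isSaturatedSperner_criticalFamily [PartialOrder P] [Finite P]
    [PartialOrder Q] [BoundedOrder Q] [Nontrivial Q] (hr : IsRankFunction r K) :
    IsSaturatedSperner (criticalFamily r Q) (K + 2) where
  not_hasChain := by
    classical
    refine not_hasChain_of_strictMonoOn (strictMonoOn_criticalFamily hr.monotone) fun z => ?_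
    have := hr.le_height z.1
    split_ifs <;> omega
  hasChain_insert _ hz := hr.hasChain_insert_criticalFamily hz

end RankFunction

section LayerRank

variable {α : Type*} [DecidableEq α] {D : ℕ → Finset (Finset α)} {t : ℕ}

/-- The rank function of a layered sequence `D`: the last `i ≤ t` such that `S` contains a member of
`D i`. -/
def layerRank (D : ℕ → Finset (Finset α)) (t : ℕ) (S : Finset α) : ℕ :=
  Nat.findGreatest (fun i => ∃ A ∈ D i, A ⊆ S) t

theorem layerRank_mono (D : ℕ → Finset (Finset α)) (t : ℕ) : Monotone (layerRank D t) :=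
  fun _ _ hST => Nat.findGreatest_mono_left (fun _ ⟨A, hA, hAS⟩ => ⟨A, hA, hAS.trans hST⟩) t

theorem le_layerRank {i : ℕ} (hi : i ≤ t) {A : Finset α} (hA : A ∈ D i) : i ≤ layerRank D t A :=
  Nat.le_findGreatest hi ⟨A, hA, subset_rfl⟩

theorem Layered.exists_subset_of_le_layerRank (hD : Layered D t) (h₀ : ∅ ∈ D 0) {S : Finset α}
    {i : ℕ} (hi : i ≤ layerRank D t S) : ∃ A ∈ D i, A ⊆ S := by
  induction hi using Nat.decreasingInduction with
  | self =>
    exact Nat.findGreatest_spec (P := fun i => ∃ A ∈ D i, A ⊆ S) (Nat.zero_le t)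
      ⟨∅, h₀, empty_subset S⟩
  | of_succ i hi ih =>
    obtain ⟨A, hA, hAS⟩ := ih
    obtain ⟨B, hB, hBA⟩ := hD (i + 1) (Nat.le_add_left 1 i)
      (Nat.succ_le_of_lt hi |>.trans (Nat.findGreatest_le t)) A hA
    exact ⟨B, hB, hBA.subset.trans hAS⟩

theorem Layered.layerRank_eq (hD : Layered D t) (h₀ : ∅ ∈ D 0)
    (hstrict : ∀ i < t, ∀ A ∈ D i, ∀ B ∈ D (i + 1), ¬ B ⊆ A) {i : ℕ} (hi : i ≤ t)
    {A : Finset α} (hA : A ∈ D i) : layerRank D t A = i := by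
  refine le_antisymm (not_lt.1 fun hlt => ?_) (le_layerRank hi hA)
  obtain ⟨B, hB, hBA⟩ := hD.exists_subset_of_le_layerRank h₀ (Nat.succ_le_of_lt hlt)
  exact hstrict i (hlt.trans_le (Nat.findGreatest_le t)) A hA B hB hBA

theorem Layered.lowerCritical_layerRank_subset (hD : Layered D t) (h₀ : ∅ ∈ D 0) :
    lowerCritical (layerRank D t) ⊆ (range (t + 1)).biUnion D := by
  intro S hS
  have hrank : layerRank D t S ≤ t := Nat.findGreatest_le t
  obtain ⟨A, hA, hAS⟩ := hD.exists_subset_of_le_layerRank h₀ (le_refl (layerRank D t S))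
  obtain rfl : A = S :=
    hAS.eq_of_not_ssubset fun hlt => (le_layerRank hrank hA).not_gt (hS A hlt)
  exact mem_biUnion.2 ⟨_, mem_range_succ_iff.2 hrank, hA⟩

theorem Layered.isRankFunction_layerRank [Fintype α] (hD : Layered D t) (h₀ : ∅ ∈ D 0)
    (hstrict : ∀ i < t, ∀ A ∈ D i, ∀ B ∈ D (i + 1), ¬ B ⊆ A)
    (hcompl : ∀ S, layerRank D t S + layerRank D t Sᶜ = t) :
    IsRankFunction (layerRank D t) t := by
  refine .of_compl (layerRank_mono D t) hcompl fun S j hj => ?_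
  obtain ⟨A, hA, hAS⟩ := hD.exists_subset_of_le_layerRank h₀ hj
  exact ⟨A, hAS, hD.layerRank_eq h₀ hstrict (hj.trans (Nat.findGreatest_le t)) hA⟩

end LayerRank

/-- The layers of lower critical sets, `1 + 5 + 7 + 7 + 7 + 1` in number, of a rank function of
height `5` on the subsets of `ZMod 7`: layer `2` is a Hamiltonian cycle, layer `3` consists of the
lines of the Fano plane, and layer `4` of the minimal vertex covers of the cycle. For `0 < i < 6`,
layers `i` and `6 - i` consist of the minimal sets meeting all members of each other, which makes
the rank function self-dual. -/
def fanoLayer : ℕ → Finset (Finset (ZMod 7))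
  | 0 => {∅}
  | 1 => ({0, 2}ᶜ : Finset (ZMod 7)).image fun x => {x}
  | 2 => univ.image fun x => {x, x + 1}
  | 3 => univ.image fun x => {x, x + 1, x + 3}
  | 4 => univ.image fun x => {x, x + 1, x + 3, x + 5}
  | 5 => {{0, 2}ᶜ}
  | _ => ∅

theorem layered_fanoLayer : Layered fanoLayer 5 := by
  intro i hi hi5
  interval_cases i <;> decide +kernel

theorem not_subset_of_mem_fanoLayer_succ :
    ∀ i < 5, ∀ A ∈ fanoLayer i, ∀ B ∈ fanoLayer (i + 1), ¬ B ⊆ A := by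
  decide +kernel

theorem layerRank_fanoLayer_add_compl (S : Finset (ZMod 7)) :
    layerRank fanoLayer 5 S + layerRank fanoLayer 5 Sᶜ = 5 := by
  revert S
  decide +kernel

theorem card_biUnion_fanoLayer : #((range 6).biUnion fanoLayer) = 28 := by
  decide +kernel

theorem range_mapEmbedding {α β : Type*} [Fintype α] (f : α ↪ β) :
    Set.range (mapEmbedding f) = Set.Iic (univ.map f) := by
  ext s
  simp [subset_map_iff, eq_comm]

/-- Some finite Boolean lattice has a rank function of height `K` with at most `a` lower critical
and at most `a` upper critical sets. -/
def AdmitsRankFunction (K a : ℕ) : Prop :=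
  ∃ (α : Type) (_ : Fintype α) (r : Finset α → ℕ), IsRankFunction r K ∧
    (lowerCritical r).ncard ≤ a ∧ (upperCritical r).ncard ≤ a

namespace AdmitsRankFunction

variable {K L a b : ℕ}

theorem of_compl {α : Type} [Fintype α] [DecidableEq α] {r : Finset α → ℕ}
    (hr : IsRankFunction r K) (hcompl : ∀ S, r S + r Sᶜ = K) (ha : (lowerCritical r).ncard ≤ a) :
    AdmitsRankFunction K a := by
  refine ⟨α, inferInstance, r, hr, ha, ?_⟩
  rwa [upperCritical_eq_image_compl hcompl, Set.ncard_image_of_injective _ compl_injective]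

theorem two_pow (n : ℕ) : AdmitsRankFunction n (2 ^ n) := by
  have hcompl (S : Finset (Fin n)) : #S + #Sᶜ = n := by simp
  refine .of_compl (.of_compl card_mono hcompl fun S _ => exists_subset_card_eq) hcompl ?_
  simpa using Set.ncard_le_card (lowerCritical (card : Finset (Fin n) → ℕ))

theorem fano : AdmitsRankFunction 5 28 := by
  have h₀ : ∅ ∈ fanoLayer 0 := mem_singleton_self ∅
  refine .of_compl (layered_fanoLayer.isRankFunction_layerRank h₀ not_subset_of_mem_fanoLayer_succ
    layerRank_fanoLayer_add_compl) layerRank_fanoLayer_add_compl ?_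
  rw [← card_biUnion_fanoLayer, ← Set.ncard_coe_finset]
  exact Set.ncard_le_ncard (layered_fanoLayer.lowerCritical_layerRank_subset h₀)

theorem add (h : AdmitsRankFunction K a) (h' : AdmitsRankFunction L b) :
    AdmitsRankFunction (K + L) (a * b) := by
  obtain ⟨α, _, r, hr, hlower, hupper⟩ := h
  obtain ⟨β, _, q, hq, hlower', hupper'⟩ := h'
  let e : Finset (α ⊕ β) ≃o Finset α × Finset β := Finset.sumEquiv
  have ncard_le {s : Set (Finset α × Finset β)} {t : Set (Finset α)} {u : Set (Finset β)}
      (hs : s ⊆ t ×ˢ u) (ht : t.ncard ≤ a) (hu : u.ncard ≤ b) : (e ⁻¹' s).ncard ≤ a * b := by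
    calc (e ⁻¹' s).ncard = s.ncard :=
          Set.ncard_preimage_of_injective_subset_range e.injective (by simp [e.range_eq])
      _ ≤ (t ×ˢ u).ncard := Set.ncard_le_ncard hs
      _ ≤ a * b := Set.ncard_prod.trans_le (Nat.mul_le_mul ht hu)
  refine ⟨α ⊕ β, inferInstance, (fun p => r p.1 + q p.2) ∘ e, (hr.add hq).comp_orderIso e, ?_, ?_⟩
  · rw [lowerCritical_comp_orderIso]
    exact ncard_le (lowerCritical_add_subset r q) hlower hlower'
  · rw [upperCritical_comp_orderIso]
    exact ncard_le (upperCritical_add_subset r q) hupper hupper'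

theorem five_mul (j : ℕ) : AdmitsRankFunction (5 * j) (28 ^ j) := by
  induction j with
  | zero => exact two_pow 0
  | succ j ih => exact ih.add fano

theorem exists_isSatKSperner (h : AdmitsRankFunction K a) :
    ∃ n₀ : ℕ, ∀ {β : Type*} [DecidableEq β] (X : Finset β), n₀ ≤ #X →
      ∃ F : Finset (Finset β), IsSatKSperner X F (K + 2) ∧ #F ≤ 2 * a := by
  obtain ⟨α, _, r, hr, hlower, hupper⟩ := h
  refine ⟨Fintype.card α + 1, fun {β} _ X hX => ?_⟩
  let γ := Fin (#X - Fintype.card α)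
  have : Nonempty γ := Fin.pos_iff_nonempty.1 (by omega)
  let e : α ⊕ γ ≃ X := Fintype.equivOfCardEq (by simp [γ]; omega)
  let ι : α ⊕ γ ↪ β := e.toEmbedding.trans (Function.Embedding.subtype _)
  let f : Finset α × Finset γ ↪o Finset β :=
    Finset.sumEquiv.symm.toOrderEmbedding.trans (mapEmbedding ι)
  have hf : Set.range f = Set.Iic X := by
    have hι : univ.map ι = X := by rw [← map_map, map_univ_equiv, univ_eq_attach, attach_map_val]
    rw [← hι, ← range_mapEmbedding]
    exact Finset.sumEquiv.symm.surjective.range_comp (mapEmbedding ι)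
  have hsat : IsSaturatedSperner (criticalFamily r (Finset γ)) (K + 2) :=
    hr.isSaturatedSperner_criticalFamily
  obtain ⟨F, hF, hcard⟩ := hsat.exists_isSatKSperner (Set.toFinite _) f hf
  refine ⟨F, hF, ?_⟩
  have := ncard_criticalFamily_le r (Finset γ)
  omega

end AdmitsRankFunction

theorem two_mul_pow_five_le (j : ℕ) {i : ℕ} (hi : i < 5) :
    (2 * (28 ^ j * 2 ^ i)) ^ 5 ≤ 28 ^ (5 * j + i + 2) := by
  have hrem : (2 * 2 ^ i) ^ 5 ≤ 28 ^ (i + 2) := by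
    interval_cases i <;> norm_num
  calc (2 * (28 ^ j * 2 ^ i)) ^ 5 = 28 ^ (5 * j) * (2 * 2 ^ i) ^ 5 := by ring
    _ ≤ 28 ^ (5 * j) * 28 ^ (i + 2) := Nat.mul_le_mul_left _ hrem
    _ = 28 ^ (5 * j + i + 2) := by ring

theorem exists_isSatKSperner_card_pow_five_le (k : ℕ) :
    ∃ n₀ : ℕ, ∀ {β : Type*} [DecidableEq β] (X : Finset β), n₀ ≤ #X →
      ∃ F : Finset (Finset β), IsSatKSperner X F k ∧ #F ^ 5 ≤ 28 ^ k := by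
  match k with
  | 0 =>
    refine ⟨0, fun X _ => ?_⟩
    obtain ⟨F, hF, hcard⟩ := isSaturatedSperner_empty.exists_isSatKSperner Set.finite_empty
      (OrderEmbedding.subtype (· ∈ Set.Iic X)) Subtype.range_coe
    exact ⟨F, hF, by simp [hcard]⟩
  | 1 =>
    refine ⟨0, fun X _ => ?_⟩
    obtain ⟨F, hF, hcard⟩ := isSaturatedSperner_singleton_bot.exists_isSatKSperner
      (Set.finite_singleton _) (OrderEmbedding.subtype (· ∈ Set.Iic X)) Subtype.range_coe
    exact ⟨F, hF, by simp [hcard]⟩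
  | K + 2 =>
    obtain ⟨j, i, hi, rfl⟩ : ∃ j i, i < 5 ∧ K = 5 * j + i :=
      ⟨K / 5, K % 5, Nat.mod_lt _ (by norm_num), (Nat.div_add_mod K 5).symm⟩
    obtain ⟨n₀, h⟩ := ((AdmitsRankFunction.five_mul j).add (.two_pow i)).exists_isSatKSperner
    refine ⟨n₀, fun X hX => ?_⟩
    obtain ⟨F, hF, hcard⟩ := h X hX
    exact ⟨F, hF, (Nat.pow_le_pow_left hcard 5).trans (two_mul_pow_five_le j hi)⟩

theorem upper_bound_28_general (k : ℕ) :
    ∃ n₀ : ℕ, ∀ {β : Type*} [DecidableEq β] (X : Finset β), n₀ ≤ #X →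
      ∃ F : Finset (Finset β), IsSatKSperner X F k ∧ (#F : ℝ) ≤ 28 ^ ((k : ℝ) / 5) := by
  obtain ⟨n₀, h⟩ := exists_isSatKSperner_card_pow_five_le k
  refine ⟨n₀, fun X hX => ?_⟩
  obtain ⟨F, hF, hcard⟩ := h X hX
  refine ⟨F, hF, ?_⟩
  rw [div_eq_mul_inv, Real.rpow_mul (by norm_num), Real.rpow_natCast,
    Real.le_rpow_inv_iff_of_pos (by positivity) (by positivity) (by norm_num)]
  exact_mod_cast hcard

theorem upper_bound_28 :
    ∀ k : ℕ, 7 ≤ k → ∃ n₀ : ℕ, ∀ n : ℕ, n₀ ≤ n →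
      ∃ F : Finset (Finset ℕ), IsSatKSperner (Finset.Icc 1 n) F k ∧
        (F.card : ℝ) ≤ 2 ^ ((1 - (1 - Real.logb 2 28 / 5)) * k) := by
  intro k _
  obtain ⟨n₀, h⟩ := upper_bound_28_general k
  refine ⟨n₀, fun n hn => ?_⟩
  have hexp : (2 : ℝ) ^ ((1 - (1 - Real.logb 2 28 / 5)) * k) = 28 ^ ((k : ℝ) / 5) := by
    rw [sub_sub_cancel, div_mul_comm, mul_comm, Real.rpow_mul (by norm_num),
      Real.rpow_logb (by norm_num) (by norm_num) (by norm_num)]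
  rw [hexp]
  exact h (Icc 1 n) (by simpa using hn)
end

section
/- For every integer k ≥ 497 and every integer n > 2^{2^{k-1}}, every saturated k-Sperner system F ⊆ P([n]) satisfies |F| > √k · 2^{k/2}. -/
open Finset

/-!
If `F` were too small, `X` would have more than `2 ^ #F` points, so two of them would lie in exactly
the same members of `F`; let `H` consist of these two points. Every member of `F` is then either
small (disjoint from `H`) or large (containing `H`). Given `S ⊆ X \ H`, adding a single point of `H`
to `S` yields a set outside `F`. By saturation this set completes a chain, so for some `i + j = k`
there are a chain of `i` small sets inside `S` and a chain of `j` complements of large sets inside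
the complement of `S`. Hence for `a + b = k - 1` the `a`-th level `P` of the small sets and the
`b`-th level `Q` of the complements satisfy: every `S ⊆ X \ H` contains a member of `P`, or its
complement contains a member of `Q`.

The members of `P` and `Q` have at least `a` and `b` points. Taking `S` random with density `p`, the
union bound gives `1 ≤ #P * p ^ a + #Q * (1 - p) ^ b`, and a suitable `p` gives
`#P + #Q ≥ 2 ^ (2 * a * b / (a + b))`. With `K = k - 1`, summation over all levels gives
`#F ≥ 2 ^ (K / 2) * ∑ i ≤ K, exp (-(2 * log 2 / K) * (i - K / 2) ^ 2)`. The sum is a Riemann sum of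
a Gaussian, about `√(π / (2 * log 2)) * √K`, and `√(π / (2 * log 2)) > √2`.
-/

section CanonicalDecomposition

variable {α : Type*} [DecidableEq α] {F G : Finset (Finset α)} {A S X : Finset α} {m : ℕ}

theorem mem_canonRest_succ {i : ℕ} :
    A ∈ canonRest F (i + 1) ↔ A ∈ canonRest F i ∧ ∃ B ∈ canonRest F i, B ⊂ A := by
  simp only [canonRest, minimalsIn, mem_sdiff, mem_filter, not_and, not_forall,
    ssubset_iff_subset_ne]
  grind

theorem le_card_of_mem_canonRest {i : ℕ} (hA : A ∈ canonRest F i) : i ≤ #A := by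
  induction i generalizing A with
  | zero => exact Nat.zero_le _
  | succ i ih =>
    obtain ⟨-, B, hB, hBA⟩ := mem_canonRest_succ.1 hA
    exact (ih hB).trans_lt (card_lt_card hBA)

theorem canonDecomp_subset_canonRest (F : Finset (Finset α)) (i : ℕ) :
    canonDecomp F i ⊆ canonRest F i :=
  filter_subset _ _

theorem canonRest_subset (F : Finset (Finset α)) (i : ℕ) : canonRest F i ⊆ F := by
  induction i with
  | zero => exact Subset.rfl
  | succ i ih => exact sdiff_subset.trans ih

theorem canonDecomp_subset (F : Finset (Finset α)) (i : ℕ) : canonDecomp F i ⊆ F :=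
  (canonDecomp_subset_canonRest F i).trans (canonRest_subset F i)

theorem sum_card_canonDecomp_add_card_canonRest (F : Finset (Finset α)) (m : ℕ) :
    ∑ i ∈ range m, #(canonDecomp F i) + #(canonRest F m) = #F := by
  induction m with
  | zero => simp [canonRest]
  | succ m ih =>
    rw [sum_range_succ, add_assoc, ← ih, canonRest, ← canonDecomp, add_comm #(canonDecomp F m),
      card_sdiff_add_card_eq_card (canonDecomp_subset_canonRest F m)]

theorem exists_mem_canonDecomp_subset {i : ℕ} (hA : A ∈ canonRest F i) :
    ∃ B ∈ canonDecomp F i, B ⊆ A := by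
  obtain ⟨B, hBA, hB⟩ := exists_le_minimal _ hA
  exact ⟨B, mem_filter.2 ⟨hB.prop, fun C hC hCB => hB.eq_of_le hC hCB⟩, hBA⟩

theorem mem_canonRest_of_strictMono {C : Fin m → Finset α} (hC : StrictMono C)
    (hF : ∀ j, C j ∈ F) {i : ℕ} {j : Fin m} (hij : i ≤ j) : C j ∈ canonRest F i := by
  induction i generalizing j with
  | zero => exact hF j
  | succ i ih =>
    have hi : (⟨i, by omega⟩ : Fin m) < j := Fin.lt_def.2 hij
    exact mem_canonRest_succ.2 ⟨ih (by omega), C ⟨i, _⟩, ih le_rfl, hC hi⟩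

theorem HasChainOfLen.mono (hFG : F ⊆ G) : HasChainOfLen F m → HasChainOfLen G m
  | ⟨C, hC, hF⟩ => ⟨C, hC, fun i => hFG (hF i)⟩

theorem HasChainOfLen.image_sdiff (hX : ∀ A ∈ F, A ⊆ X) :
    HasChainOfLen F m → HasChainOfLen (F.image (X \ ·)) m := by
  rintro ⟨C, hC, hF⟩
  refine ⟨fun i => X \ C i.rev, fun i j hij => ?_, fun i => mem_image_of_mem _ (hF _)⟩
  have hlt : C j.rev ⊂ C i.rev := hC (Fin.rev_lt_rev.2 hij)
  obtain ⟨x, hxi, hxj⟩ := exists_of_ssubset hlt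
  exact Finset.ssubset_iff_subset_ne.2 ⟨sdiff_subset_sdiff Subset.rfl hlt.subset, fun h =>
    (mem_sdiff.1 (h.ge (mem_sdiff.2 ⟨hX _ (hF _) hxi, hxj⟩))).2 hxi⟩

theorem HasChainOfLen.exists_mem_canonDecomp (h : HasChainOfLen {A ∈ F | A ⊆ S} m) {i : ℕ}
    (hi : i < m) : ∃ B ∈ canonDecomp F i, B ⊆ S := by
  obtain ⟨C, hC, hF⟩ := h
  have hCF : C ⟨i, hi⟩ ∈ canonRest F i :=
    mem_canonRest_of_strictMono hC (fun j => (mem_filter.1 (hF j)).1) le_rfl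
  obtain ⟨B, hB, hBC⟩ := exists_mem_canonDecomp_subset hCF
  exact ⟨B, hB, hBC.trans (mem_filter.1 (hF _)).2⟩

theorem exists_hasChainOfLen_ssubset_ssuperset {k : ℕ} (hF : ¬ HasChainOfLen F (k + 1))
    (h : HasChainOfLen (insert S F) (k + 1)) :
    ∃ i j, i + j = k ∧ HasChainOfLen {A ∈ F | A ⊂ S} i ∧ HasChainOfLen {A ∈ F | S ⊂ A} j := by
  obtain ⟨C, hC, hCF⟩ := h
  obtain ⟨i, rfl⟩ : ∃ i, C i = S := by
    by_contra! hS
    exact hF ⟨C, hC, fun i => (mem_insert.1 (hCF i)).resolve_left (hS i)⟩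
  have hmem (j : Fin (k + 1)) (hj : j ≠ i) : C j ∈ F :=
    (mem_insert.1 (hCF j)).resolve_left (hC.injective.ne hj)
  refine ⟨i, k - i, by omega, ⟨fun j => C ⟨j, by omega⟩, fun a b hab => hC hab, fun j => ?_⟩,
    ⟨fun j => C ⟨i + 1 + j, by omega⟩, fun a b hab => hC ?_, fun j => ?_⟩⟩
  · have hj : (⟨j, by omega⟩ : Fin (k + 1)) < i := Fin.lt_def.2 j.2
    exact mem_filter.2 ⟨hmem _ hj.ne, hC hj⟩
  · exact Fin.lt_def.2 (Nat.add_lt_add_left hab _)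
  · have hj : i < (⟨i + 1 + j, by omega⟩ : Fin (k + 1)) :=
      Fin.lt_def.2 (show (i : ℕ) < i + 1 + j by omega)
    exact mem_filter.2 ⟨hmem _ hj.ne', hC hj⟩

end CanonicalDecomposition

section Covering

variable {α : Type*} [DecidableEq α]

theorem sum_Icc_pow_card_mul_pow_card_sdiff {R : Type*} [CommSemiring R] (p q : R)
    {A B Y : Finset α} (hAB : A ⊆ B) (hBY : B ⊆ Y) :
    ∑ S ∈ Icc A B, p ^ #S * q ^ #(Y \ S) = p ^ #A * q ^ #(Y \ B) * (p + q) ^ #(B \ A) := by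
  have hinj : Set.InjOn (A ∪ ·) ((B \ A).powerset : Set (Finset α)) :=
    Set.LeftInvOn.injOn (f₁' := (· \ A)) fun T hT =>
      union_sdiff_cancel_left (subset_sdiff.1 (mem_powerset.1 hT)).2.symm
  rw [Icc_eq_image_powerset hAB, sum_image hinj, ← sum_pow_mul_eq_add_pow, mul_sum]
  refine sum_congr rfl fun T hT => ?_
  rw [mem_powerset, subset_sdiff] at hT
  have hAT : A ∪ T ⊆ B := union_subset hAB hT.1
  have hunion : #(A ∪ T) = #A + #T := card_union_of_disjoint hT.2.symm
  have hcompl : #(Y \ (A ∪ T)) = #(Y \ B) + (#(B \ A) - #T) := by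
    have := card_le_card hAT
    have := card_le_card hBY
    rw [card_sdiff_of_subset (hAT.trans hBY), card_sdiff_of_subset hBY, card_sdiff_of_subset hAB]
    omega
  rw [hunion, hcompl, pow_add, pow_add]
  ring

theorem sum_biUnion_le_sum_sum {ι β M : Type*} [DecidableEq β] [AddCommMonoid M] [PartialOrder M]
    [IsOrderedAddMonoid M] {f : β → M} (hf : ∀ x, 0 ≤ f x) (s : Finset ι) (t : ι → Finset β) :
    ∑ x ∈ s.biUnion t, f x ≤ ∑ i ∈ s, ∑ x ∈ t i, f x := by
  classical
  induction s using Finset.induction_on with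
  | empty => simp
  | insert i s hi ih =>
    rw [biUnion_insert, sum_insert hi]
    refine le_trans ?_ (add_le_add_right ih _)
    rw [← sum_union_inter]
    exact le_add_of_nonneg_right (sum_nonneg fun x _ => hf x)

variable {Y : Finset α} {P Q : Finset (Finset α)} {a b : ℕ}

theorem one_le_card_mul_pow_add_card_mul_pow {p q : ℝ} (hp : 0 ≤ p) (hq : 0 ≤ q) (hpq : p + q = 1)
    (hP : ∀ A ∈ P, A ⊆ Y ∧ a ≤ #A) (hQ : ∀ B ∈ Q, B ⊆ Y ∧ b ≤ #B)
    (hcover : ∀ S ⊆ Y, (∃ A ∈ P, A ⊆ S) ∨ ∃ B ∈ Q, B ⊆ Y \ S) :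
    1 ≤ #P * p ^ a + #Q * q ^ b := by
  -- the probability that the random subset of `Y` containing each point independently with
  -- probability `p` equals `S`
  let μ (S : Finset α) : ℝ := p ^ #S * q ^ #(Y \ S)
  have hμ (S : Finset α) : 0 ≤ μ S := by positivity
  have hsup : ∀ A ∈ P, ∑ S ∈ Icc A Y, μ S ≤ p ^ a := fun A hA => by
    rw [sum_Icc_pow_card_mul_pow_card_sdiff p q (hP A hA).1 Subset.rfl, hpq]
    simpa using pow_le_pow_of_le_one hp (by linarith) (hP A hA).2
  have hdisj : ∀ B ∈ Q, ∑ S ∈ Icc ∅ (Y \ B), μ S ≤ q ^ b := fun B hB => by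
    rw [sum_Icc_pow_card_mul_pow_card_sdiff p q (empty_subset _) sdiff_subset, hpq,
      Finset.sdiff_sdiff_eq_self (hQ B hB).1]
    simpa using pow_le_pow_of_le_one hq (by linarith) (hQ B hB).2
  have hunion : Icc ∅ Y ⊆ P.biUnion (Icc · Y) ∪ Q.biUnion fun B => Icc ∅ (Y \ B) := by
    intro S hS
    have hSY : S ⊆ Y := (mem_Icc.1 hS).2
    refine mem_union.2 ((hcover S hSY).imp ?_ ?_)
    · rintro ⟨A, hA, hAS⟩
      exact mem_biUnion.2 ⟨A, hA, mem_Icc.2 ⟨hAS, hSY⟩⟩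
    · rintro ⟨B, hB, hBS⟩
      refine mem_biUnion.2 ⟨B, hB, mem_Icc.2 ⟨empty_subset S, ?_⟩⟩
      exact subset_sdiff.2 ⟨hSY, (disjoint_of_subset_left hBS disjoint_sdiff_self_left).symm⟩
  calc (1 : ℝ) = ∑ S ∈ Icc ∅ Y, μ S := by
        rw [sum_Icc_pow_card_mul_pow_card_sdiff p q (empty_subset Y) Subset.rfl, hpq]
        simp
    _ ≤ ∑ S ∈ P.biUnion (Icc · Y), μ S + ∑ S ∈ Q.biUnion fun B => Icc ∅ (Y \ B), μ S := by
        rw [← sum_union_inter]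
        exact (sum_le_sum_of_subset_of_nonneg hunion fun S _ _ => hμ S).trans
          (le_add_of_nonneg_right (sum_nonneg fun S _ => hμ S))
    _ ≤ ∑ A ∈ P, ∑ S ∈ Icc A Y, μ S + ∑ B ∈ Q, ∑ S ∈ Icc ∅ (Y \ B), μ S :=
        add_le_add (sum_biUnion_le_sum_sum hμ _ _) (sum_biUnion_le_sum_sum hμ _ _)
    _ ≤ #P * p ^ a + #Q * q ^ b := by
        rw [← nsmul_eq_mul, ← nsmul_eq_mul]
        exact add_le_add (sum_le_card_nsmul _ _ _ hsup) (sum_le_card_nsmul _ _ _ hdisj)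

theorem one_le_two_rpow_neg_add_two_rpow_neg {s t : ℝ} (hst : s + t ≤ 2) :
    1 ≤ (2 : ℝ) ^ (-s) + 2 ^ (-t) := by
  have hmul : (2 : ℝ) ^ (-2 : ℝ) ≤ 2 ^ (-s) * 2 ^ (-t) := by
    rw [← Real.rpow_add two_pos]
    exact Real.rpow_le_rpow_of_exponent_le one_le_two (by linarith)
  have hquarter : (2 : ℝ) ^ (-2 : ℝ) = 1 / 4 := by norm_num [Real.rpow_neg]
  have hs : (0 : ℝ) < 2 ^ (-s) := by positivity
  have ht : (0 : ℝ) < 2 ^ (-t) := by positivity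
  rw [hquarter] at hmul
  rw [← one_le_sq_iff₀ (by positivity)]
  linarith [four_mul_le_sq_add ((2 : ℝ) ^ (-s)) (2 ^ (-t))]

/-- For `a = b = 0` the exponent is `0 / 0 = 0`, as it should be. -/
theorem two_rpow_le_card_add_card (hP : ∀ A ∈ P, A ⊆ Y ∧ a ≤ #A)
    (hQ : ∀ B ∈ Q, B ⊆ Y ∧ b ≤ #B)
    (hcover : ∀ S ⊆ Y, (∃ A ∈ P, A ⊆ S) ∨ ∃ B ∈ Q, B ⊆ Y \ S) :
    (2 : ℝ) ^ (2 * a * b / (a + b) : ℝ) ≤ #P + #Q := by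
  set e : ℝ := 2 * a * b / (a + b) with he
  -- `x` and `y` solve `x ^ a = y ^ b = 2 ^ (-e)`, and AM-GM gives `x + y ≥ 1`, so they dominate the
  -- probabilities `x / (x + y)` and `y / (x + y)`.
  let x : ℝ := 2 ^ (-(2 * b / (a + b)) : ℝ)
  let y : ℝ := 2 ^ (-(2 * a / (a + b)) : ℝ)
  have hx : 0 < x := by positivity
  have hy : 0 < y := by positivity
  have hxy : 1 ≤ x + y := by
    apply one_le_two_rpow_neg_add_two_rpow_neg
    calc (2 * b / (a + b) + 2 * a / (a + b) : ℝ) = 2 * ((a + b) / (a + b)) := by ring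
      _ ≤ 2 * 1 := by gcongr; exact div_self_le_one _
      _ = 2 := mul_one 2
  have hxa : x ^ a = 2 ^ (-e) := by
    rw [← Real.rpow_mul_natCast zero_le_two, he]
    ring_nf
  have hyb : y ^ b = 2 ^ (-e) := by
    rw [← Real.rpow_mul_natCast zero_le_two, he]
    ring_nf
  have hp : (x / (x + y)) ^ a ≤ 2 ^ (-e) := by
    rw [← hxa]
    gcongr
    exact div_le_self hx.le hxy
  have hq : (y / (x + y)) ^ b ≤ 2 ^ (-e) := by
    rw [← hyb]
    gcongr
    exact div_le_self hy.le hxy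
  have hle : (1 : ℝ) ≤ (#P + #Q) * 2 ^ (-e) :=
    calc (1 : ℝ) ≤ #P * (x / (x + y)) ^ a + #Q * (y / (x + y)) ^ b :=
          one_le_card_mul_pow_add_card_mul_pow (by positivity) (by positivity)
            (by field_simp) hP hQ hcover
      _ ≤ #P * 2 ^ (-e) + #Q * 2 ^ (-e) := by gcongr
      _ = (#P + #Q) * 2 ^ (-e) := by ring
  rwa [Real.rpow_neg zero_le_two, ← div_eq_mul_inv, one_le_div (by positivity)] at hle

end Covering

section HomogeneousSet

variable {α : Type*} [DecidableEq α] {F : Finset (Finset α)} {A H S X : Finset α}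

/-- `H` is homogeneous for `F` if every member of `F` contains all of `H` or none of it: the
condition in `IsHomogAtom`, without maximality and without `2 ≤ #H`. -/
def IsHomogeneousFor (F : Finset (Finset α)) (H : Finset α) : Prop :=
  ∀ S ∈ F, S ∩ H = ∅ ∨ S ∩ H = H

/-- The complements in `X` of the large members of `F`. Passing to complements turns chains above
a set into chains below its complement, so that small and large members can be treated alike. -/
def largeSetCompls (X : Finset α) (F : Finset (Finset α)) (H : Finset α) : Finset (Finset α) :=
  (largeSets F H).image (X \ ·)

theorem exists_isHomogeneousFor_of_two_pow_card_lt (h : 2 ^ #F < #X) :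
    ∃ H ⊆ X, H.Nontrivial ∧ IsHomogeneousFor F H := by
  have hmaps : Set.MapsTo (fun x => {S ∈ F | x ∈ S}) (X : Set α) (F.powerset : Set _) :=
    fun x _ => mem_powerset.2 (filter_subset _ _)
  obtain ⟨x, hx, y, hy, hxy, heq⟩ :=
    exists_ne_map_eq_of_card_lt_of_maps_to (by rwa [card_powerset]) hmaps
  refine ⟨{x, y}, by grind, ⟨x, by simp, y, by simp, hxy⟩, fun S hS => ?_⟩
  have hiff : x ∈ S ↔ y ∈ S := by simpa [hS] using congrArg (S ∈ ·) heq
  grind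

theorem card_smallSets_add_card_largeSetCompls_le (hH : H.Nonempty) :
    #(smallSets F H) + #(largeSetCompls X F H) ≤ #F := by
  have hdisj : Disjoint (smallSets F H) (largeSets F H) := disjoint_filter.2 fun S _ hS hHS =>
    hH.ne_empty (by rwa [inter_eq_right.2 hHS] at hS)
  calc #(smallSets F H) + #(largeSetCompls X F H)
      ≤ #(smallSets F H) + #(largeSets F H) := Nat.add_le_add_left card_image_le _
    _ = #(smallSets F H ∪ largeSets F H) := (card_union_of_disjoint hdisj).symm
    _ ≤ #F := card_le_card (union_subset (filter_subset _ _) (filter_subset _ _))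

theorem subset_sdiff_of_mem_smallSets (hX : ∀ A ∈ F, A ⊆ X) (hA : A ∈ smallSets F H) :
    A ⊆ X \ H := by
  obtain ⟨hAF, hAH⟩ := mem_filter.1 hA
  exact subset_sdiff.2 ⟨hX A hAF, disjoint_iff_inter_eq_empty.2 hAH⟩

theorem subset_sdiff_of_mem_largeSetCompls (hA : A ∈ largeSetCompls X F H) : A ⊆ X \ H := by
  obtain ⟨B, hB, rfl⟩ := mem_image.1 hA
  exact sdiff_subset_sdiff Subset.rfl (mem_filter.1 hB).2

/-- Saturation is applied to `S` together with a single point of `H`: this set is not in `F`, and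
the members of `F` below it are small while those above it are large. -/
theorem IsSatKSperner.exists_hasChainOfLen {k : ℕ} (hF : IsSatKSperner X F k) (hHX : H ⊆ X)
    (hH : H.Nontrivial) (hFH : IsHomogeneousFor F H) (hS : S ⊆ X \ H) :
    ∃ i j, i + j = k ∧ HasChainOfLen {A ∈ smallSets F H | A ⊆ S} i ∧
      HasChainOfLen {A ∈ largeSetCompls X F H | A ⊆ (X \ H) \ S} j := by
  obtain ⟨hX, hno, hsat⟩ := hF
  obtain ⟨x, hx, y, hy, hxy⟩ := hH
  have hyS : y ∉ insert x S := by grind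
  have hnot : insert x S ∉ F := fun h => by
    rcases hFH _ h with h | h
    · exact notMem_empty x (h ▸ mem_inter.2 ⟨mem_insert_self x S, hx⟩)
    · exact hyS (inter_eq_right.1 h hy)
  obtain ⟨i, j, hij, hbelow, habove⟩ := exists_hasChainOfLen_ssubset_ssuperset hno
    (hsat _ (insert_subset (hHX hx) (hS.trans sdiff_subset)) hnot)
  refine ⟨i, j, hij, hbelow.mono fun A hA => ?_,
    (habove.image_sdiff fun A hA => hX A (mem_filter.1 hA).1).mono fun B hB => ?_⟩
  · obtain ⟨hAF, hAS⟩ := mem_filter.1 hA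
    have hAH : A ∩ H = ∅ := (hFH A hAF).resolve_right fun h =>
      hyS (hAS.subset (inter_eq_right.1 h hy))
    refine mem_filter.2 ⟨mem_filter.2 ⟨hAF, hAH⟩, ?_⟩
    have hxA : x ∉ A := fun hxA => notMem_empty x (hAH ▸ mem_inter.2 ⟨hxA, hx⟩)
    exact (subset_insert_iff_of_notMem hxA).1 hAS.subset
  · obtain ⟨A, hA, rfl⟩ := mem_image.1 hB
    obtain ⟨hAF, hSA⟩ := mem_filter.1 hA
    have hxA : x ∈ A := hSA.subset (mem_insert_self x S)
    have hHA : H ⊆ A := inter_eq_right.1 ((hFH A hAF).resolve_left fun h =>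
      notMem_empty x (h ▸ mem_inter.2 ⟨hxA, hx⟩))
    refine mem_filter.2 ⟨mem_image_of_mem _ (mem_filter.2 ⟨hAF, hHA⟩), ?_⟩
    rw [sdiff_sdiff_left]
    exact sdiff_subset_sdiff Subset.rfl (union_subset hHA ((subset_insert x S).trans hSA.subset))

theorem two_rpow_le_card_canonDecomp_add_card_canonDecomp {a b : ℕ}
    (hF : IsSatKSperner X F (a + b + 1)) (hHX : H ⊆ X) (hH : H.Nontrivial)
    (hFH : IsHomogeneousFor F H) :
    (2 : ℝ) ^ (2 * a * b / (a + b) : ℝ) ≤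
      #(canonDecomp (smallSets F H) a) + #(canonDecomp (largeSetCompls X F H) b) := by
  refine two_rpow_le_card_add_card (Y := X \ H) (fun A hA => ⟨?_, ?_⟩) (fun B hB => ⟨?_, ?_⟩)
    fun S hS => ?_
  · exact subset_sdiff_of_mem_smallSets hF.1 (canonDecomp_subset _ _ hA)
  · exact le_card_of_mem_canonRest (canonDecomp_subset_canonRest _ _ hA)
  · exact subset_sdiff_of_mem_largeSetCompls (canonDecomp_subset _ _ hB)
  · exact le_card_of_mem_canonRest (canonDecomp_subset_canonRest _ _ hB)
  · obtain ⟨i, j, hij, hi, hj⟩ := hF.exists_hasChainOfLen hHX hH hFH hS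
    rcases (by omega : a < i ∨ b < j) with ha | hb
    · exact .inl (hi.exists_mem_canonDecomp ha)
    · exact .inr (hj.exists_mem_canonDecomp hb)

theorem IsSatKSperner.sum_two_rpow_le_card {K : ℕ} (hF : IsSatKSperner X F (K + 1)) (hHX : H ⊆ X)
    (hH : H.Nontrivial) (hFH : IsHomogeneousFor F H) :
    ∑ a ∈ antidiagonal K, (2 : ℝ) ^ (2 * a.1 * a.2 / (a.1 + a.2) : ℝ) ≤ #F := by
  let P := smallSets F H
  let Q := largeSetCompls X F H
  calc ∑ a ∈ antidiagonal K, (2 : ℝ) ^ (2 * a.1 * a.2 / (a.1 + a.2) : ℝ)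
      ≤ ∑ a ∈ antidiagonal K, ((#(canonDecomp P a.1) : ℝ) + #(canonDecomp Q a.2)) := by
        refine sum_le_sum fun a ha => ?_
        rw [← mem_antidiagonal.1 ha] at hF
        exact two_rpow_le_card_canonDecomp_add_card_canonDecomp hF hHX hH hFH
    _ = ((∑ i ∈ range (K + 1), #(canonDecomp P i) +
          ∑ i ∈ range (K + 1), #(canonDecomp Q i) : ℕ) : ℝ) := by
        push_cast
        rw [sum_add_distrib,
          Nat.sum_antidiagonal_eq_sum_range_succ (fun i _ => (#(canonDecomp P i) : ℝ)),
          Nat.sum_antidiagonal_eq_sum_range_succ (fun _ j => (#(canonDecomp Q j) : ℝ)),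
          sum_flip fun j => (#(canonDecomp Q j) : ℝ)]
    _ ≤ #F := by
        have := sum_card_canonDecomp_add_card_canonRest P (K + 1)
        have := sum_card_canonDecomp_add_card_canonRest Q (K + 1)
        have : #P + #Q ≤ #F := card_smallSets_add_card_largeSetCompls_le hH.nonempty
        exact_mod_cast (by omega)

end HomogeneousSet

section GaussianSum

open Real

theorem integral_le_sum_Ico_add_of_unimodal {f : ℝ → ℝ} {c : ℝ} {N : ℕ} (hc : 0 ≤ c)
    (hcN : c < N) (hmono : MonotoneOn f (Set.Icc 0 c)) (hanti : AntitoneOn f (Set.Icc c N)) :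
    ∫ x in (0 : ℝ)..N, f x ≤ ∑ i ∈ Ico 1 N, f i + f c := by
  set m := ⌊c⌋₊
  have hmc : (m : ℝ) ≤ c := Nat.floor_le hc
  have hcm : c ≤ (m + 1 : ℕ) := by exact_mod_cast (Nat.lt_floor_add_one c).le
  have hmN : m + 1 ≤ N := (Nat.floor_lt hc).2 hcN
  have hmN' : ((m + 1 : ℕ) : ℝ) ≤ N := by exact_mod_cast hmN
  have hint {a b : ℝ} (ha : 0 ≤ a) (hab : a ≤ b) (hb : b ≤ N) :
      IntervalIntegrable f MeasureTheory.volume a b := by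
    have hl : IntervalIntegrable f MeasureTheory.volume 0 c :=
      MonotoneOn.intervalIntegrable (by rwa [Set.uIcc_of_le hc])
    have hr : IntervalIntegrable f MeasureTheory.volume c N :=
      AntitoneOn.intervalIntegrable (by rwa [Set.uIcc_of_le hcN.le])
    refine (hl.trans hr).mono_set ?_
    rw [Set.uIcc_of_le hab, Set.uIcc_of_le (hc.trans hcN.le)]
    exact Set.Icc_subset_Icc ha hb
  have hleft : ∫ x in (0 : ℝ)..m, f x ≤ ∑ i ∈ Ico 1 (m + 1), f i := by
    rw [← sum_Ico_add' (fun i : ℕ => f i) 0 m 1]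
    exact_mod_cast MonotoneOn.integral_le_sum_Ico (Nat.zero_le m)
      (hmono.mono (Set.Icc_subset_Icc (by simp) hmc))
  have hmid : ∫ x in (m : ℝ)..(m + 1 : ℕ), f x ≤ f c := by
    have hle : (m : ℝ) ≤ (m + 1 : ℕ) := hmc.trans hcm
    calc ∫ x in (m : ℝ)..(m + 1 : ℕ), f x ≤ ∫ _ in (m : ℝ)..(m + 1 : ℕ), f c := by
          refine intervalIntegral.integral_mono_on hle (hint m.cast_nonneg hle hmN') (by simp)
            fun x hx => ?_
          rcases le_total x c with h | h
          · exact hmono ⟨m.cast_nonneg.trans hx.1, h⟩ ⟨hc, le_rfl⟩ h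
          · exact hanti ⟨le_rfl, hcN.le⟩ ⟨h, hx.2.trans hmN'⟩ h
      _ = f c := by simp
  have hright : ∫ x in ((m + 1 : ℕ) : ℝ)..N, f x ≤ ∑ i ∈ Ico (m + 1) N, f i :=
    AntitoneOn.integral_le_sum_Ico hmN (hanti.mono (Set.Icc_subset_Icc hcm le_rfl))
  rw [← intervalIntegral.integral_add_adjacent_intervals (hint le_rfl m.cast_nonneg (by linarith))
      (hint m.cast_nonneg (hmc.trans hcN.le) le_rfl),
    ← intervalIntegral.integral_add_adjacent_intervals
      (hint m.cast_nonneg (hmc.trans hcm) hmN') (hint (by positivity) hmN' le_rfl),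
    ← sum_Ico_consecutive (fun i : ℕ => f i) (Nat.le_add_left 1 m) hmN]
  linarith

theorem integral_Ioi_exp_neg_mul_sq_le {b c : ℝ} (hb : 0 < b) (hc : 0 < c) :
    ∫ x in Set.Ioi c, exp (-b * x ^ 2) ≤ exp (-b * c ^ 2) / (b * c) := by
  have hneg : -(b * c) < 0 := by simpa using mul_pos hb hc
  calc ∫ x in Set.Ioi c, exp (-b * x ^ 2) ≤ ∫ x in Set.Ioi c, exp (-(b * c) * x) := by
        refine MeasureTheory.setIntegral_mono_on (integrable_exp_neg_mul_sq hb).integrableOn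
          (integrableOn_exp_mul_Ioi hneg c) measurableSet_Ioi fun x hx => exp_le_exp.2 ?_
        have hcx : c * x ≤ x * x := mul_le_mul_of_nonneg_right hx.le (hc.trans hx).le
        linarith [mul_le_mul_of_nonneg_left hcx hb.le]
    _ = exp (-b * c ^ 2) / (b * c) := by
        rw [integral_exp_mul_Ioi hneg, neg_div_neg_eq]
        ring_nf

theorem sqrt_pi_div_sub_le_integral_exp_neg_mul_sq {b c : ℝ} (hb : 0 < b) (hc : 0 < c) :
    √(π / b) - 2 * (exp (-b * c ^ 2) / (b * c)) ≤ ∫ x in -c..c, exp (-b * x ^ 2) := by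
  have hint {x y : ℝ} : IntervalIntegrable (fun x => exp (-b * x ^ 2)) MeasureTheory.volume x y :=
    (integrable_exp_neg_mul_sq hb).intervalIntegrable
  have hhalf : ∫ x in (-c)..0, exp (-b * x ^ 2) = ∫ x in 0..c, exp (-b * x ^ 2) := by
    have h := intervalIntegral.integral_comp_neg (a := 0) (b := c) fun x => exp (-b * x ^ 2)
    simp only [neg_sq, neg_zero] at h
    exact h.symm
  have htail : (∫ x in 0..c, exp (-b * x ^ 2)) + ∫ x in Set.Ioi c, exp (-b * x ^ 2) =
      √(π / b) / 2 := by
    rw [← integral_gaussian_Ioi]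
    exact intervalIntegral.integral_interval_add_Ioi
      (integrable_exp_neg_mul_sq hb).integrableOn (integrable_exp_neg_mul_sq hb).integrableOn
  rw [← intervalIntegral.integral_add_adjacent_intervals hint hint, hhalf]
  linarith [integral_Ioi_exp_neg_mul_sq_le hb hc]

theorem sqrt_pi_div_sub_le_sum_exp_neg_mul_sq {b : ℝ} (hb : 0 < b) {N : ℕ} (hN : 0 < N) :
    √(π / b) - 2 * (exp (-b * (N / 2) ^ 2) / (b * (N / 2))) - 1 ≤
      ∑ i ∈ range (N + 1), exp (-b * (i - N / 2) ^ 2) := by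
  have hN' : (0 : ℝ) < N := by exact_mod_cast hN
  have hmono : MonotoneOn (fun x : ℝ => exp (-b * (x - N / 2) ^ 2)) (Set.Icc 0 (N / 2)) := by
    intro x _ y hy hxy
    refine exp_le_exp.2 (mul_le_mul_of_nonpos_left ?_ (by linarith))
    rw [sub_sq_comm x, sub_sq_comm y]
    exact pow_le_pow_left₀ (by linarith [hy.2]) (by linarith) 2
  have hanti : AntitoneOn (fun x : ℝ => exp (-b * (x - N / 2) ^ 2)) (Set.Icc (N / 2) N) := by
    intro x hx y _ hxy
    refine exp_le_exp.2 (mul_le_mul_of_nonpos_left ?_ (by linarith))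
    exact pow_le_pow_left₀ (by linarith [hx.1]) (by linarith) 2
  calc √(π / b) - 2 * (exp (-b * (N / 2) ^ 2) / (b * (N / 2))) - 1
      ≤ (∫ x in -(N / 2 : ℝ)..(N / 2), exp (-b * x ^ 2)) - 1 := by
        gcongr
        exact sqrt_pi_div_sub_le_integral_exp_neg_mul_sq hb (by positivity)
    _ = (∫ x in (0 : ℝ)..N, exp (-b * (x - N / 2) ^ 2)) - 1 := by
        rw [intervalIntegral.integral_comp_sub_right fun x => exp (-b * x ^ 2)]
        ring_nf
    _ ≤ ∑ i ∈ Ico 1 N, exp (-b * (i - N / 2) ^ 2) := by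
        rw [sub_le_iff_le_add]
        simpa using
          integral_le_sum_Ico_add_of_unimodal (half_pos hN').le (half_lt_self hN') hmono hanti
    _ ≤ ∑ i ∈ range (N + 1), exp (-b * (i - N / 2) ^ 2) := by
        refine sum_le_sum_of_subset_of_nonneg (fun i hi => ?_) fun i _ _ => (exp_pos _).le
        rw [mem_Ico] at hi
        exact mem_range.2 (by omega)

theorem sum_antidiagonal_two_rpow {K : ℕ} (hK : K ≠ 0) :
    ∑ a ∈ antidiagonal K, (2 : ℝ) ^ (2 * a.1 * a.2 / (a.1 + a.2) : ℝ) =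
      2 ^ (K / 2 : ℝ) * ∑ i ∈ range (K + 1), exp (-(2 * log 2 / K) * (i - K / 2) ^ 2) := by
  rw [mul_sum, Nat.sum_antidiagonal_eq_sum_range_succ
    fun a b : ℕ => (2 : ℝ) ^ (2 * a * b / (a + b) : ℝ)]
  refine sum_congr rfl fun i hi => ?_
  have hK' : (K : ℝ) ≠ 0 := Nat.cast_ne_zero.2 hK
  have hiK : i ≤ K := by simpa [Nat.lt_succ_iff] using hi
  rw [rpow_def_of_pos two_pos, rpow_def_of_pos two_pos, ← exp_add, Nat.cast_sub hiK,
    add_sub_cancel]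
  congr 1
  field_simp
  ring

theorem sqrt_mul_two_rpow_lt_sum_antidiagonal {K : ℕ} (hK : 149 ≤ K) :
    √(K + 1) * 2 ^ ((K + 1) / 2 : ℝ) <
      ∑ a ∈ antidiagonal K, (2 : ℝ) ^ (2 * a.1 * a.2 / (a.1 + a.2) : ℝ) := by
  have hK' : (149 : ℝ) ≤ K := by exact_mod_cast hK
  have hlog := log_two_lt_d9
  have hlog' := log_two_gt_d9
  set s := √(K : ℝ)
  have hsK : s ^ 2 = K := sq_sqrt (by positivity)
  have hs12 : 12.2 ≤ s := le_sqrt_of_sq_le (by linarith)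
  -- `√(π / (2 * log 2)) ≈ 1.505` exceeds `√2`, which leaves room for the error terms
  have hgauss : 1.504 * s ≤ √(π / (2 * log 2 / K)) := by
    refine le_sqrt_of_sq_le ?_
    rw [mul_pow, hsK, div_div_eq_mul_div, le_div_iff₀ (by positivity)]
    nlinarith [pi_gt_d2]
  have htail : exp (-(2 * log 2 / K) * (K / 2) ^ 2) / (2 * log 2 / K * (K / 2)) ≤ 0.01 := by
    have hexp : -(2 * log 2 / K) * (K / 2 : ℝ) ^ 2 = -(K / 2 * log 2) := by field_simp
    have hlin : 2 * log 2 / K * (K / 2 : ℝ) = log 2 := by field_simp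
    have hy : 50 ≤ K / 2 * log 2 := by nlinarith
    have hexp_le : exp (-(K / 2 * log 2)) ≤ 0.001 := by
      rw [exp_neg]
      refine inv_le_of_inv_le₀ (by norm_num) ?_
      linarith [quadratic_le_exp_of_nonneg (by linarith : 0 ≤ K / 2 * log 2),
        pow_le_pow_left₀ (by norm_num) hy 2]
    rw [hexp, hlin, div_le_iff₀ (log_pos one_lt_two)]
    linarith
  have hroot : √(K + 1) * √2 < 1.504 * s - 1.02 := by
    rw [← sqrt_mul (by positivity), sqrt_lt' (by linarith), ← hsK]
    nlinarith
  have hsum := sqrt_pi_div_sub_le_sum_exp_neg_mul_sq (N := K) (b := 2 * log 2 / K)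
    (by positivity) (by omega)
  calc √(K + 1) * 2 ^ ((K + 1) / 2 : ℝ) = 2 ^ (K / 2 : ℝ) * (√(K + 1) * √2) := by
        rw [add_div, rpow_add two_pos, sqrt_eq_rpow 2]
        ring
    _ < 2 ^ (K / 2 : ℝ) * ∑ i ∈ range (K + 1), exp (-(2 * log 2 / K) * (i - K / 2) ^ 2) := by
        gcongr
        linarith
    _ = _ := (sum_antidiagonal_two_rpow (by omega)).symm

end GaussianSum

theorem sqrt_mul_two_rpow_lt_two_pow {k : ℕ} (hk : 5 ≤ k) :
    √k * 2 ^ (k / 2 : ℝ) < 2 ^ (k - 1) := by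
  have hlt : 4 * k < 2 ^ k := by
    induction k, hk using Nat.le_induction with
    | base => norm_num
    | succ k _ ih => rw [pow_succ]; omega
  have hsq : ((2 : ℝ) ^ (k / 2 : ℝ)) ^ 2 = 2 ^ k := by
    rw [← Real.rpow_mul_natCast zero_le_two, Nat.cast_ofNat, div_mul_cancel₀ _ two_ne_zero,
      Real.rpow_natCast]
  have hpow : (2 : ℝ) ^ k = 2 * 2 ^ (k - 1) := (mul_pow_sub_one (by omega) 2).symm
  refine lt_of_pow_lt_pow_left₀ 2 (by positivity) ?_
  calc (√k * 2 ^ (k / 2 : ℝ)) ^ 2 = k * 2 ^ k := by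
        rw [mul_pow, Real.sq_sqrt k.cast_nonneg, hsq]
    _ < 2 ^ k / 4 * 2 ^ k := by
        gcongr
        rw [lt_div_iff₀' four_pos]
        exact_mod_cast hlt
    _ = (2 ^ (k - 1)) ^ 2 := by
        rw [hpow]
        ring

theorem two_rpow_lt_two_pow_two_pow {k : ℕ} (hk : 5 ≤ k) :
    (2 : ℝ) ^ (√k * 2 ^ (k / 2 : ℝ)) < (2 ^ 2 ^ (k - 1) : ℕ) :=
  calc (2 : ℝ) ^ (√k * 2 ^ (k / 2 : ℝ)) < 2 ^ ((2 ^ (k - 1) : ℕ) : ℝ) :=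
        Real.rpow_lt_rpow_of_exponent_lt one_lt_two
          (by exact_mod_cast sqrt_mul_two_rpow_lt_two_pow hk)
    _ = (2 ^ 2 ^ (k - 1) : ℕ) := by rw [Real.rpow_natCast, Nat.cast_pow 2, Nat.cast_ofNat]

theorem IsSatKSperner.sqrt_mul_two_rpow_lt_card {α : Type*} [DecidableEq α] {k : ℕ} (hk : 150 ≤ k)
    {X H : Finset α} {F : Finset (Finset α)} (hF : IsSatKSperner X F k) (hHX : H ⊆ X)
    (hH : H.Nontrivial) (hFH : IsHomogeneousFor F H) : √k * 2 ^ (k / 2 : ℝ) < #F := by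
  obtain ⟨K, rfl⟩ : ∃ K, k = K + 1 := ⟨k - 1, by omega⟩
  push_cast
  exact (sqrt_mul_two_rpow_lt_sum_antidiagonal (by omega)).trans_le
    (hF.sum_two_rpow_le_card hHX hH hFH)

theorem lower_bound_sqrtk_general {α : Type*} [DecidableEq α] {k : ℕ} (hk : 150 ≤ k)
    {X : Finset α} (hX : (2 : ℝ) ^ (√k * 2 ^ (k / 2 : ℝ)) < #X) {F : Finset (Finset α)}
    (hF : IsSatKSperner X F k) : √k * 2 ^ (k / 2 : ℝ) < #F := by
  by_contra! hle
  have hcard : 2 ^ #F < #X := by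
    have h : (2 : ℝ) ^ (#F : ℝ) < #X :=
      (Real.rpow_le_rpow_of_exponent_le one_le_two hle).trans_lt hX
    exact_mod_cast h
  obtain ⟨H, hHX, hH, hFH⟩ := exists_isHomogeneousFor_of_two_pow_card_lt hcard
  exact hle.not_gt (hF.sqrt_mul_two_rpow_lt_card hk hHX hH hFH)

theorem lower_bound_sqrtk (k n : ℕ) (hk : 497 ≤ k) (hn : 2 ^ 2 ^ (k - 1) < n)
    (F : Finset (Finset ℕ)) (hF : IsSatKSperner (Finset.Icc 1 n) F k) :
    Real.sqrt k * 2 ^ ((k : ℝ) / 2) < F.card := by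
  have hcard : ((2 ^ 2 ^ (k - 1) : ℕ) : ℝ) < #(Icc 1 n) := by simpa using mod_cast hn
  exact lower_bound_sqrtk_general (by omega)
    ((two_rpow_lt_two_pow_two_pow (by omega)).trans hcard) hF
end
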